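/- For the regular embedding A_1 → B_2 determined by the A_1 simple root β = α_1 + 2α_2 (where α_1 is the long and α_2 the short simple root of B_2): the set of positive roots of B_2 orthogonal to β is Δ_{a⊥}⁺ = {α_1}; the defect vanishes, D_{a⊥} = 0; and the fan expansion ∏_{α ∈ Δ⁺∖Δ_{a⊥}⁺} (1 − e^{−π_a α})^{mult(α) − mult_a(π_a α)} equals (1 − e^{−ω})² = 1 − 2e^{−ω} + e^{−2ω}, where ω = β/2 is the fundamental weight of the embedded A_1. Consequently γ₀ = 0 with s(γ₀) = −1, and the injection fan is Γ_{A_1→B_2} = {(ω; 2), (2ω; −1)}, the second entries being the values of the sign function s. -/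

import Mathlib

/-!
STATEMENT 9.  For the regular embedding `A_1 → B_2` determined by the `A_1` simple root
`β = α_1 + 2α_2` (`α_1` the long, `α_2` the short simple root of `B_2`): the positive
roots of `B_2` orthogonal to `β` are `Δ_{a⊥}⁺ = {α_1}`; the defect vanishes,
`D_{a⊥} = ρ_{a⊥} − π_{a⊥}(ρ) = 0`; the fan expansion
`∏_{α∈Δ⁺∖Δ_{a⊥}⁺} (1−e^{−π_a α})^{mult(α)−mult_a(π_a α)}` equals
`(1−e^{−ω})² = 1 − 2e^{−ω} + e^{−2ω}` with `ω = β/2` the fundamental weight of the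
embedded `A_1`; consequently `γ₀ = 0`, `s(γ₀) = −1`, and the injection fan is
`Γ_{A_1→B_2} = {(ω;2), (2ω;−1)}` (second entries the values of the sign function `s`).

The weight space is `ℝ × ℝ` with the standard euclidean product; `α_1 = (1,−1)`,
`α_2 = (0,1)`, so `β = (1,1)`; the group algebra is `AddMonoidAlgebra ℤ (ℝ × ℝ)`.
-/

noncomputable section

/-!
Both short positive roots `α₂` and `α₁ + α₂` project to the same weight `ω = β / 2` of the
embedded `A₁`, while the highest root `β` projects to itself and cancels against the root of `A₁`.
Hence the fan expansion is `(1 - e^{-ω})²`, and the sign function consists of negated signed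
binomial coefficients. The root geometry depends only on the Gram matrix of the simple roots.
-/

section SignFunction

variable {R G : Type*} [CommRing R] [AddCommGroup G] {P : AddMonoidAlgebra R G} {s : G →₀ R}

/-- `s` is the sign function of the fan expansion `P`, that is `P = -∑ s(γ) e^{-γ}`, where
`e^γ` is `single γ 1`. -/
def IsSignFunction (P : AddMonoidAlgebra R G) (s : G →₀ R) : Prop :=
  P = -(s.sum fun γ c => c • (AddMonoidAlgebra.single (-γ) (1 : R) : AddMonoidAlgebra R G))

theorem IsSignFunction.apply (h : IsSignFunction P s) (γ : G) : s γ = -P.coeff (-γ) := by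
  classical
  rw [h]
  simp +contextual [Finsupp.sum, Finsupp.single_apply, eq_comm]

theorem one_sub_single_neg_pow (ω : G) (n : ℕ) :
    ((1 : AddMonoidAlgebra R G) - AddMonoidAlgebra.single (-ω) 1) ^ n =
      ∑ k ∈ Finset.range (n + 1),
        AddMonoidAlgebra.single (-(k • ω)) ((-1) ^ k * (n.choose k : R)) := by
  rw [sub_eq_neg_add, ← AddMonoidAlgebra.single_neg, add_pow]
  refine Finset.sum_congr rfl fun k _ => ?_
  rw [one_pow, mul_one, AddMonoidAlgebra.single_pow, smul_neg, mul_comm, ← nsmul_eq_mul,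
    AddMonoidAlgebra.smul_single, nsmul_eq_mul, mul_comm]

theorem one_sub_single_neg_sq (ω : G) :
    ((1 : AddMonoidAlgebra R G) - AddMonoidAlgebra.single (-ω) 1) ^ 2 =
      1 - 2 • AddMonoidAlgebra.single (-ω) 1 + AddMonoidAlgebra.single (-(2 • ω)) 1 := by
  rw [sub_sq, AddMonoidAlgebra.single_pow, one_pow, one_pow, mul_one, smul_neg, nsmul_eq_mul,
    Nat.cast_ofNat]

theorem IsSignFunction.eq_sum_single {ω : G} {n : ℕ}
    (h : IsSignFunction ((1 - AddMonoidAlgebra.single (-ω) 1) ^ n) s) :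
    s = ∑ k ∈ Finset.range (n + 1), Finsupp.single (k • ω) ((-1) ^ (k + 1) * (n.choose k : R)) := by
  classical
  ext γ
  rw [h.apply, one_sub_single_neg_pow]
  simp only [AddMonoidAlgebra.coeff_sum, AddMonoidAlgebra.coeff_single, Finsupp.finsetSum_apply,
    Finsupp.single_apply, neg_inj, ← Finset.sum_neg_distrib]
  refine Finset.sum_congr rfl fun k _ => ?_
  split_ifs <;> ring

theorem IsSignFunction.apply_nsmul {ω : G} {n : ℕ}
    (h : IsSignFunction ((1 - AddMonoidAlgebra.single (-ω) 1) ^ n) s)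
    (hω : ¬IsOfFinAddOrder ω) (k : ℕ) : s (k • ω) = (-1) ^ (k + 1) * n.choose k := by
  classical
  rw [h.eq_sum_single]
  simp only [Finsupp.finsetSum_apply, Finsupp.single_apply,
    (injective_nsmul_iff_not_isOfFinAddOrder.mpr hω).eq_iff, Finset.sum_ite_eq',
    Finset.mem_range, ite_eq_left_iff, not_lt]
  intro hk
  rw [Nat.choose_eq_zero_of_lt hk, Nat.cast_zero, mul_zero]

theorem IsSignFunction.coe_support [CharZero R] {ω : G} {n : ℕ}
    (h : IsSignFunction ((1 - AddMonoidAlgebra.single (-ω) 1) ^ n) s)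
    (hω : ¬IsOfFinAddOrder ω) : (s.support : Set G) = (fun k : ℕ => k • ω) '' Set.Iic n := by
  classical
  ext γ
  rw [Finset.mem_coe]
  constructor
  · intro hγ
    rw [h.eq_sum_single] at hγ
    obtain ⟨k, hk, hγk⟩ := Finset.mem_biUnion.mp (Finsupp.support_finsetSum hγ)
    exact ⟨k, Finset.mem_range_succ_iff.mp hk,
      (Finset.mem_singleton.mp (Finsupp.support_single_subset hγk)).symm⟩
  · rintro ⟨k, hk, rfl⟩
    have hchoose : (n.choose k : R) ≠ 0 := Nat.cast_ne_zero.mpr (Nat.choose_pos hk).ne'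
    rw [Finsupp.mem_support_iff, h.apply_nsmul hω]
    exact ((isUnit_neg_one.pow (k + 1)).mul_right_eq_zero).not.mpr hchoose

/-- The fan expansion `∏_{α ∈ Δ ∖ Δ'} (1 - e^{-π α})^{m(α) - m'(π α)}`, where `m` and `m'` are the
root multiplicities of the ambient algebra and of the subalgebra, and `Δ'` is the set of positive
roots annihilating the Cartan subalgebra of the latter. The exponents are truncated differences. -/
def fanExpansion (R : Type*) [CommRing R] [DecidableEq G] (Δ Δ' : Finset G) (π : G → G)
    (m m' : G → ℕ) : AddMonoidAlgebra R G :=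
  ∏ α ∈ Δ \ Δ', ((1 : AddMonoidAlgebra R G) - AddMonoidAlgebra.single (-(π α)) 1) ^
    (m α - m' (π α))

end SignFunction

section RootGeometry

variable {K V : Type*} [Field K] [AddCommGroup V] [Module K V]

/-- `α₁` (long) and `α₂` (short) have, up to scaling, the Gram matrix of a base of the root
system `B₂` with respect to `B`. -/
structure IsB2Base (B : LinearMap.BilinForm K V) (α₁ α₂ : V) : Prop where
  isSymm : B.IsSymm
  short_short_ne_zero : B α₂ α₂ ≠ 0
  long_long : B α₁ α₁ = 2 * B α₂ α₂
  long_short : B α₁ α₂ = -B α₂ α₂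

/-- The positive roots of `B₂` with long simple root `α₁` and short simple root `α₂`. -/
def b2PosRoots [DecidableEq V] (α₁ α₂ : V) : Finset V :=
  {α₁, α₂, α₁ + α₂, α₁ + 2 • α₂}

/-- The Weyl vector of `B₂`, half the sum of the positive roots. -/
def b2WeylVector (K : Type*) {V : Type*} [Field K] [AddCommGroup V] [Module K V] (α₁ α₂ : V) : V :=
  (1 / 2 : K) • (α₁ + α₂ + (α₁ + α₂) + (α₁ + 2 • α₂))

/-- The root multiplicity function of the `A₁` with roots `±β`. -/
def a1Mult [DecidableEq V] (β x : V) : ℕ :=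
  if x = β ∨ x = -β then 1 else 0

/-- The orthogonal projection onto the line through `v`, with respect to the form `B`; it is zero
when `v` is isotropic. -/
def lineProj (B : LinearMap.BilinForm K V) (v x : V) : V :=
  (B x v / B v v) • v

theorem lineProj_self {B : LinearMap.BilinForm K V} {v : V} (hv : B v v ≠ 0) :
    lineProj B v v = v := by
  rw [lineProj, div_self hv, one_smul]

theorem a1Mult_self [DecidableEq V] (β : V) : a1Mult β β = 1 :=
  if_pos (Or.inl rfl)

theorem a1Mult_smul [DecidableEq V] {β : V} (hβ : β ≠ 0) {c : K} (h1 : c ≠ 1) (hneg : c ≠ -1) :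
    a1Mult β (c • β) = 0 := by
  refine if_neg (not_or.mpr ⟨fun h => h1 ?_, fun h => hneg ?_⟩)
  · exact smul_left_injective K hβ (by simpa using h)
  · exact smul_left_injective K hβ (by simpa using h)

namespace IsB2Base

variable {B : LinearMap.BilinForm K V} {α₁ α₂ : V}

theorem short_ne_zero (h : IsB2Base B α₁ α₂) : α₂ ≠ 0 :=
  fun h0 => h.short_short_ne_zero (by rw [h0, map_zero])

theorem long_ne_zero (h : IsB2Base B α₁ α₂) : α₁ ≠ 0 := by
  rintro rfl
  exact h.short_short_ne_zero (by simpa using h.long_short)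

theorem short_long (h : IsB2Base B α₁ α₂) : B α₂ α₁ = -B α₂ α₂ := by
  rw [h.isSymm.eq, h.long_short]

theorem long_highest (h : IsB2Base B α₁ α₂) : B α₁ (α₁ + 2 • α₂) = 0 := by
  simp only [map_add, map_nsmul, nsmul_eq_mul, Nat.cast_ofNat, h.long_long, h.long_short]
  ring

theorem short_highest (h : IsB2Base B α₁ α₂) : B α₂ (α₁ + 2 • α₂) = B α₂ α₂ := by
  simp only [map_add, map_nsmul, nsmul_eq_mul, Nat.cast_ofNat, h.short_long]
  ring

theorem add_highest (h : IsB2Base B α₁ α₂) : B (α₁ + α₂) (α₁ + 2 • α₂) = B α₂ α₂ := by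
  rw [map_add B, LinearMap.add_apply, h.long_highest, h.short_highest, zero_add]

theorem highest_highest (h : IsB2Base B α₁ α₂) :
    B (α₁ + 2 • α₂) (α₁ + 2 • α₂) = 2 * B α₂ α₂ := by
  rw [map_add B, LinearMap.add_apply, map_nsmul, LinearMap.smul_apply, h.long_highest,
    h.short_highest, zero_add, nsmul_eq_mul, Nat.cast_ofNat]

theorem short_ne_highest (h : IsB2Base B α₁ α₂) : α₂ ≠ α₁ + 2 • α₂ := by
  intro heq
  refine h.short_short_ne_zero (neg_eq_zero.mp ?_)
  calc
    -B α₂ α₂ = B α₁ α₂ := h.long_short.symm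
    _ = B α₁ (α₁ + 2 • α₂) := congrArg (B α₁) heq
    _ = 0 := h.long_highest

theorem lineProj_highest_short (h : IsB2Base B α₁ α₂) :
    lineProj B (α₁ + 2 • α₂) α₂ = (1 / 2 : K) • (α₁ + 2 • α₂) := by
  rw [lineProj, h.short_highest, h.highest_highest, div_mul_cancel_right₀ h.short_short_ne_zero,
    one_div]

theorem lineProj_highest_add (h : IsB2Base B α₁ α₂) :
    lineProj B (α₁ + 2 • α₂) (α₁ + α₂) = (1 / 2 : K) • (α₁ + 2 • α₂) := by
  rw [lineProj, h.add_highest, h.highest_highest, div_mul_cancel_right₀ h.short_short_ne_zero,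
    one_div]

variable [CharZero K]

theorem highest_highest_ne_zero (h : IsB2Base B α₁ α₂) :
    B (α₁ + 2 • α₂) (α₁ + 2 • α₂) ≠ 0 :=
  h.highest_highest.trans_ne (mul_ne_zero two_ne_zero h.short_short_ne_zero)

theorem highest_ne_zero (h : IsB2Base B α₁ α₂) : α₁ + 2 • α₂ ≠ 0 :=
  fun h0 => h.highest_highest_ne_zero (by rw [h0, map_zero])

theorem apply_highest_ne_zero [DecidableEq V] (h : IsB2Base B α₁ α₂) {α : V}
    (hα : α ∈ ({α₂, α₁ + α₂, α₁ + 2 • α₂} : Finset V)) : B α (α₁ + 2 • α₂) ≠ 0 := by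
  simp only [Finset.mem_insert, Finset.mem_singleton] at hα
  rcases hα with rfl | rfl | rfl
  · exact h.short_highest.trans_ne h.short_short_ne_zero
  · exact h.add_highest.trans_ne h.short_short_ne_zero
  · exact h.highest_highest_ne_zero

theorem setOf_orthogonal_highest [DecidableEq V] (h : IsB2Base B α₁ α₂) :
    {α | α ∈ b2PosRoots α₁ α₂ ∧ B α (α₁ + 2 • α₂) = 0} = {α₁} := by
  ext α
  constructor
  · rintro ⟨hα, horth⟩
    exact (Finset.mem_insert.mp hα).resolve_right fun hne => h.apply_highest_ne_zero hne horth
  · rintro rfl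
    exact ⟨Finset.mem_insert_self .., h.long_highest⟩

theorem b2PosRoots_sdiff_long [DecidableEq V] (h : IsB2Base B α₁ α₂) :
    b2PosRoots α₁ α₂ \ {α₁} = {α₂, α₁ + α₂, α₁ + 2 • α₂} := by
  rw [b2PosRoots, Finset.sdiff_singleton_eq_erase,
    Finset.erase_insert fun hα₁ => h.apply_highest_ne_zero hα₁ h.long_highest]

theorem lineProj_long_b2WeylVector (h : IsB2Base B α₁ α₂) :
    lineProj B α₁ (b2WeylVector K α₁ α₂) = (1 / 2 : K) • α₁ := by
  have hρ : B (b2WeylVector K α₁ α₂) α₁ = B α₂ α₂ := by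
    simp only [b2WeylVector, map_add, map_smul, map_nsmul, LinearMap.add_apply,
      LinearMap.smul_apply, smul_eq_mul, nsmul_eq_mul, Nat.cast_ofNat, h.long_long, h.short_long]
    ring
  rw [lineProj, hρ, h.long_long, div_mul_cancel_right₀ h.short_short_ne_zero, one_div]

theorem fanExpansion_eq_sq {R : Type*} [CommRing R] [DecidableEq V] (h : IsB2Base B α₁ α₂)
    {m : V → ℕ} (hm : ∀ α ∈ b2PosRoots α₁ α₂, m α = 1) :
    fanExpansion R (b2PosRoots α₁ α₂) {α₁} (lineProj B (α₁ + 2 • α₂)) m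
        (a1Mult (α₁ + 2 • α₂)) =
      (1 - AddMonoidAlgebra.single (-((1 / 2 : K) • (α₁ + 2 • α₂))) 1) ^ 2 := by
  have hshort : α₂ ∉ ({α₁ + α₂, α₁ + 2 • α₂} : Finset V) := by
    simp [h.long_ne_zero, h.short_ne_highest]
  have hadd : α₁ + α₂ ∉ ({α₁ + 2 • α₂} : Finset V) := by
    simp [two_nsmul, h.short_ne_zero]
  have hω : a1Mult (α₁ + 2 • α₂) ((1 / 2 : K) • (α₁ + 2 • α₂)) = 0 :=
    a1Mult_smul h.highest_ne_zero (by norm_num) (by norm_num)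
  rw [fanExpansion, h.b2PosRoots_sdiff_long, Finset.prod_insert hshort, Finset.prod_insert hadd,
    Finset.prod_singleton, h.lineProj_highest_short, h.lineProj_highest_add,
    lineProj_self h.highest_highest_ne_zero, hω, a1Mult_self, hm α₂ (by simp [b2PosRoots]),
    hm (α₁ + α₂) (by simp [b2PosRoots]), hm (α₁ + 2 • α₂) (by simp [b2PosRoots])]
  ring

end IsB2Base

end RootGeometry

/-- The standard euclidean inner product on `ℝ × ℝ`, as a bilinear form (the library's norm on
`ℝ × ℝ` is the sup norm, so it carries no inner product). -/
def euclideanForm : LinearMap.BilinForm ℝ (ℝ × ℝ) :=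
  (LinearMap.mul ℝ ℝ).compl₁₂ (LinearMap.fst ℝ ℝ ℝ) (LinearMap.fst ℝ ℝ ℝ) +
    (LinearMap.mul ℝ ℝ).compl₁₂ (LinearMap.snd ℝ ℝ ℝ) (LinearMap.snd ℝ ℝ ℝ)

theorem euclideanForm_apply (v w : ℝ × ℝ) : euclideanForm v w = v.1 * w.1 + v.2 * w.2 :=
  rfl

theorem isB2Base_euclideanForm : IsB2Base euclideanForm (1, -1) (0, 1) where
  isSymm := ⟨fun v w => by simp only [euclideanForm_apply, mul_comm]⟩
  short_short_ne_zero := by norm_num [euclideanForm_apply]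
  long_long := by norm_num [euclideanForm_apply]
  long_short := by norm_num [euclideanForm_apply]

theorem A1_in_B2_injection_fan_general {R K V : Type*} [CommRing R] [CharZero R] [Field K]
    [CharZero K] [AddCommGroup V] [Module K V] [DecidableEq V] {B : LinearMap.BilinForm K V}
    {α₁ α₂ β ω : V} (h : IsB2Base B α₁ α₂) (hβ : β = α₁ + 2 • α₂) (hω : ω = (1 / 2 : K) • β)
    {m : V → ℕ} (hm : ∀ α ∈ b2PosRoots α₁ α₂, m α = 1) {s : V →₀ R}
    (hs : IsSignFunction
      (fanExpansion R (b2PosRoots α₁ α₂) {α₁} (lineProj B β) m (a1Mult β)) s) :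
    {α | α ∈ b2PosRoots α₁ α₂ ∧ B α β = 0} = {α₁} ∧
    (1 / 2 : K) • α₁ - lineProj B α₁ (b2WeylVector K α₁ α₂) = 0 ∧
    fanExpansion R (b2PosRoots α₁ α₂) {α₁} (lineProj B β) m (a1Mult β) =
      (1 - AddMonoidAlgebra.single (-ω) 1) ^ 2 ∧
    fanExpansion R (b2PosRoots α₁ α₂) {α₁} (lineProj B β) m (a1Mult β) =
      1 - 2 • AddMonoidAlgebra.single (-ω) 1 + AddMonoidAlgebra.single (-(2 • ω)) 1 ∧
    (s.support : Set V) = {0, ω, 2 • ω} ∧ s 0 = -1 ∧ s ω = 2 ∧ s (2 • ω) = -1 := by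
  have hfan : fanExpansion R (b2PosRoots α₁ α₂) {α₁} (lineProj B β) m (a1Mult β) =
      (1 - AddMonoidAlgebra.single (-ω) 1) ^ 2 := by
    rw [hω, hβ, h.fanExpansion_eq_sq hm]
  have hω_order : ¬IsOfFinAddOrder ω := by
    have := IsAddTorsionFree.of_isTorsionFree K V
    refine not_isOfFinAddOrder_of_isAddTorsionFree ?_
    rw [hω, hβ]
    exact smul_ne_zero (by norm_num) h.highest_ne_zero
  rw [hfan] at hs
  have hval := hs.apply_nsmul hω_order
  refine ⟨hβ ▸ h.setOf_orthogonal_highest, ?_, hfan, hfan.trans (one_sub_single_neg_sq ω),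
    ?_, ?_, ?_, ?_⟩
  · rw [h.lineProj_long_b2WeylVector, sub_self]
  · have hIic : Set.Iic 2 = {0, 1, 2} := by
      ext k
      simp only [Set.mem_Iic, Set.mem_insert_iff, Set.mem_singleton_iff]
      lia
    rw [hs.coe_support hω_order, hIic]
    simp [Set.image_insert_eq]
  · simpa using hval 0
  · simpa using hval 1
  · simpa [pow_succ] using hval 2

theorem A1_in_B2_injection_fan
    [DecidableEq (ℝ × ℝ)]
    -- the euclidean inner product on the weight space of B_2
    (dot : (ℝ × ℝ) → (ℝ × ℝ) → ℝ)
    (hdot : dot = fun v w => v.1 * w.1 + v.2 * w.2)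
    -- the simple roots of B_2 (α1 long, α2 short), the A_1 root β = α1 + 2α2 and its
    -- fundamental weight ω = β/2
    (α1 α2 β ω : ℝ × ℝ)
    (hα1 : α1 = (1, -1)) (hα2 : α2 = (0, 1))
    (hβ : β = α1 + 2 • α2) (hω : ω = (1/2 : ℝ) • β)
    -- the positive roots of B_2, all of multiplicity 1
    (Δplus : Finset (ℝ × ℝ))
    (hΔ : Δplus = {α1, α2, α1 + α2, α1 + 2 • α2})
    (multg : (ℝ × ℝ) → ℕ) (hmultg : ∀ α ∈ Δplus, multg α = 1)
    -- the root multiplicities of the embedded A_1 (roots ±β)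
    (multa : (ℝ × ℝ) → ℕ)
    (hmulta : multa = fun x => if x = β ∨ x = -β then 1 else 0)
    -- the Weyl vector of B_2, the Weyl vector of a⊥ = A_1 (root α1), and the
    -- orthogonal projections onto the weight spaces of a and a⊥
    (ρ ρperp : ℝ × ℝ)
    (hρ : ρ = (1/2 : ℝ) • (α1 + α2 + (α1 + α2) + (α1 + 2 • α2)))
    (hρperp : ρperp = (1/2 : ℝ) • α1)
    (πa πperp : (ℝ × ℝ) → (ℝ × ℝ))
    (hπa : πa = fun x => (dot x β / dot β β) • β)
    (hπperp : πperp = fun x => (dot x α1 / dot α1 α1) • α1)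
    -- the sign function s : ∏_{α∈Δ⁺∖Δ_{a⊥}⁺}(1−e^{−π_a α})^{mult−mult_a} = −Σ s(γ)e^{−γ}
    (s : (ℝ × ℝ) →₀ ℤ)
    (hs : (∏ α ∈ Δplus \ {α1},
        ((1 : AddMonoidAlgebra ℤ (ℝ × ℝ)) -
          AddMonoidAlgebra.single (-(πa α)) (1 : ℤ)) ^ (multg α - multa (πa α)))
      = - (s.sum fun γ c =>
          c • (AddMonoidAlgebra.single (-γ) (1 : ℤ) : AddMonoidAlgebra ℤ (ℝ × ℝ)))) :
    -- (i) the positive roots of B_2 orthogonal to β are exactly {α1};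
    {α : ℝ × ℝ | α ∈ Δplus ∧ dot α β = 0} = {α1} ∧
    -- (ii) the defect vanishes: D_{a⊥} = ρ_{a⊥} − π_{a⊥}(ρ) = 0;
    ρperp - πperp ρ = 0 ∧
    -- (iii) the fan expansion equals (1 − e^{−ω})² = 1 − 2e^{−ω} + e^{−2ω};
    (∏ α ∈ Δplus \ {α1},
        ((1 : AddMonoidAlgebra ℤ (ℝ × ℝ)) -
          AddMonoidAlgebra.single (-(πa α)) (1 : ℤ)) ^ (multg α - multa (πa α)))
      = ((1 : AddMonoidAlgebra ℤ (ℝ × ℝ)) - AddMonoidAlgebra.single (-ω) (1 : ℤ)) ^ 2 ∧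
    (∏ α ∈ Δplus \ {α1},
        ((1 : AddMonoidAlgebra ℤ (ℝ × ℝ)) -
          AddMonoidAlgebra.single (-(πa α)) (1 : ℤ)) ^ (multg α - multa (πa α)))
      = (1 : AddMonoidAlgebra ℤ (ℝ × ℝ))
          - 2 • AddMonoidAlgebra.single (-ω) (1 : ℤ)
          + AddMonoidAlgebra.single (-(2 • ω)) (1 : ℤ) ∧
    -- (iv) hence Φ_{a⊂g} = supp s = {0, ω, 2ω} with γ₀ = 0, s(γ₀) = −1, and the
    -- injection fan Γ_{A_1→B_2} = {(ω;2), (2ω;−1)}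
    (↑s.support : Set (ℝ × ℝ)) = {0, ω, 2 • ω} ∧
    s 0 = -1 ∧ s ω = 2 ∧ s (2 • ω) = -1 := by
  subst hdot hα1 hα2 hβ hω hΔ hmulta hρ hρperp hπa hπperp
  exact A1_in_B2_injection_fan_general isB2Base_euclideanForm rfl rfl hmultg hs
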